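/- arXiv:2306.04792 — 2 statements merged into one kernel-verified Lean document; each statement's English description precedes it below -/
import Mathlib

section
/- In the randomized controlled trial model with responses, for every attribute a : N → {0,1} with |a| = #{i : a(i)=1} > 0 and every position k ∈ {1,…,s}: Pr(R_k = 1 | (T_k = 1) ∩ (A_k = 1)) = (1/|a|)·Σ_{i : a(i)=1} τ_i and Pr(R_k = 1 | (T_k = 0) ∩ (A_k = 1)) = (1/|a|)·Σ_{i : a(i)=1} ν_i, where A_k = a(i_k). -/
/- Randomized controlled trial model with responses:
   a uniformly random injective s-tuple of individuals from `Fin n`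
   (encoded as `Fin s ↪ Fin n`), an independent uniformly random t-element
   subset of positions `Fin s` (the treated positions), and, given these,
   independent Bernoulli responses at each position: position `k` responds
   with probability `τ (i_k)` if treated and `ν (i_k)` if untreated. -/

open Finset BigOperators
open scoped Classical

namespace RCT

/-- Probability weight of a sample point `(σ, T, R)`. -/
noncomputable def w (n s t : ℕ) (τ ν : Fin n → ℝ)
    (ω : (Fin s ↪ Fin n) × Finset (Fin s) × (Fin s → Bool)) : ℝ :=
  ((Fintype.card (Fin s ↪ Fin n) : ℝ))⁻¹ *
    (if ω.2.1.card = t then ((s.choose t : ℝ))⁻¹ else 0) *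
    ∏ k : Fin s,
      (if ω.2.2 k = true
        then (if k ∈ ω.2.1 then τ (ω.1 k) else ν (ω.1 k))
        else 1 - (if k ∈ ω.2.1 then τ (ω.1 k) else ν (ω.1 k)))

/-- Probability of an event. -/
noncomputable def Pr (n s t : ℕ) (τ ν : Fin n → ℝ)
    (E : (Fin s ↪ Fin n) × Finset (Fin s) × (Fin s → Bool) → Prop) : ℝ :=
  ∑ ω : (Fin s ↪ Fin n) × Finset (Fin s) × (Fin s → Bool),
    if E ω then w n s t τ ν ω else 0

/-- Conditional probability `Pr (E | F)`. -/
noncomputable def cPr (n s t : ℕ) (τ ν : Fin n → ℝ)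
    (E F : (Fin s ↪ Fin n) × Finset (Fin s) × (Fin s → Bool) → Prop) : ℝ :=
  Pr n s t τ ν (fun ω => E ω ∧ F ω) / Pr n s t τ ν F

/-- Expectation of a real-valued random variable. -/
noncomputable def Ex (n s t : ℕ) (τ ν : Fin n → ℝ)
    (f : (Fin s ↪ Fin n) × Finset (Fin s) × (Fin s → Bool) → ℝ) : ℝ :=
  ∑ ω : (Fin s ↪ Fin n) × Finset (Fin s) × (Fin s → Bool), w n s t τ ν ω * f ω

theorem bern_sum {s : ℕ} (p : Fin s → ℝ) :
    ∑ R : Fin s → Bool, ∏ j, (if R j = true then p j else 1 - p j) = 1 := by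
  have h := Finset.prod_univ_sum (fun _ : Fin s => (univ : Finset Bool))
    (fun j b => if b = true then p j else 1 - p j)
  rw [Fintype.piFinset_univ] at h
  rw [← h]
  simp

theorem bern_marg {s : ℕ} (p : Fin s → ℝ) (k : Fin s) :
    ∑ R : Fin s → Bool, (if R k = true then
      ∏ j, (if R j = true then p j else 1 - p j) else 0) = p k := by
  have h := Finset.prod_univ_sum (fun _ : Fin s => (univ : Finset Bool))
    (fun j b => if b = true then p j else if j = k then 0 else 1 - p j)
  rw [Fintype.piFinset_univ] at h
  have h2 : ∀ R : Fin s → Bool, (if R k = true then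
      ∏ j, (if R j = true then p j else 1 - p j) else 0) =
      ∏ j, (if R j = true then p j else if j = k then 0 else 1 - p j) := by
    intro R
    by_cases hR : R k = true
    · rw [if_pos hR]
      refine Finset.prod_congr rfl fun j _ => ?_
      by_cases hj : j = k
      · subst hj; simp [hR]
      · simp [hj]
    · rw [if_neg hR]
      symm
      apply Finset.prod_eq_zero (Finset.mem_univ k)
      simp [hR]
  rw [Finset.sum_congr rfl fun R _ => h2 R, ← h]
  rw [Finset.prod_eq_single k]
  · simp
  · intro j _ hj
    simp [hj]
  · simp

theorem emb_sum {n s : ℕ} (hsn : s ≤ n) (k : Fin s) :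
    ∃ c : ℝ, c ≠ 0 ∧ ∀ f : Fin n → ℝ, ∑ σ : Fin s ↪ Fin n, f (σ k) = c * ∑ i, f i := by
  let σ0 : Fin s ↪ Fin n := Fin.castLEEmb hsn
  let i0 : Fin n := σ0 k
  refine ⟨∑ σ : Fin s ↪ Fin n, if σ k = i0 then 1 else 0, ?_, ?_⟩
  · apply ne_of_gt
    apply Finset.sum_pos'
    · intro σ _; split_ifs <;> norm_num
    · exact ⟨σ0, Finset.mem_univ _, by simp [i0]⟩
  · intro f
    have key : ∀ i : Fin n, (∑ σ : Fin s ↪ Fin n, if σ k = i then (1 : ℝ) else 0) =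
        ∑ σ : Fin s ↪ Fin n, if σ k = i0 then (1 : ℝ) else 0 := by
      intro i
      refine Fintype.sum_equiv (Equiv.embeddingCongr (Equiv.refl _) (Equiv.swap i i0)) _ _ ?_
      intro σ
      have : (Equiv.embeddingCongr (Equiv.refl _) (Equiv.swap i i0) σ) k
          = Equiv.swap i i0 (σ k) := by
        simp [Equiv.embeddingCongr]
      rw [this]
      have h2 : Equiv.swap i i0 (σ k) = i0 ↔ σ k = i := by
        rw [Equiv.swap_apply_eq_iff, Equiv.swap_apply_right]
      simp only [h2]
    calc ∑ σ : Fin s ↪ Fin n, f (σ k)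
        = ∑ σ : Fin s ↪ Fin n, ∑ i, (if σ k = i then (1 : ℝ) else 0) * f i := by
          simp
      _ = ∑ i, (∑ σ : Fin s ↪ Fin n, if σ k = i then (1 : ℝ) else 0) * f i := by
          rw [Finset.sum_comm]
          simp only [Finset.sum_mul]
      _ = _ := by
          simp only [key]
          rw [Finset.mul_sum]

theorem cPr_gen (n s t : ℕ) (hts : t < s) (hsn : s ≤ n)
    (τ ν : Fin n → ℝ) (a : Fin n → Fin 2) (ha : 0 < (univ.filter (fun i => a i = 1)).card)
    (k : Fin s) (P : Finset (Fin s) → Prop) (q : Fin n → ℝ)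
    (hq : ∀ T, P T → ∀ i, (if k ∈ T then τ i else ν i) = q i)
    (hP : ∃ T : Finset (Fin s), T.card = t ∧ P T) :
    cPr n s t τ ν (fun ω => ω.2.2 k = true) (fun ω => P ω.2.1 ∧ a (ω.1 k) = 1) =
      (1 / ((univ.filter (fun i => a i = 1)).card : ℝ)) *
        ∑ i ∈ univ.filter (fun i => a i = 1), q i := by
  obtain ⟨c, hc, hcs⟩ := emb_sum hsn k
  set K : ℝ := ((Fintype.card (Fin s ↪ Fin n) : ℝ))⁻¹ with hK
  set C : ℝ := ∑ T : Finset (Fin s), if P T then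
    (if T.card = t then ((s.choose t : ℝ))⁻¹ else 0) else 0 with hC
  have hK0 : K ≠ 0 := by
    rw [hK]
    apply inv_ne_zero
    have : Nonempty (Fin s ↪ Fin n) := ⟨Fin.castLEEmb hsn⟩
    exact_mod_cast Fintype.card_ne_zero
  have hch : (0 : ℝ) < ((s.choose t : ℝ))⁻¹ := by
    apply inv_pos.mpr
    exact_mod_cast Nat.choose_pos hts.le
  have hC0 : C ≠ 0 := by
    apply ne_of_gt
    apply Finset.sum_pos'
    · intro T _
      split_ifs <;> first | exact hch.le | exact le_rfl
    · obtain ⟨T, h1, h2⟩ := hP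
      exact ⟨T, Finset.mem_univ _, by rw [if_pos h2, if_pos h1]; exact hch⟩
  have den : Pr n s t τ ν (fun ω => P ω.2.1 ∧ a (ω.1 k) = 1) =
      K * C * (c * ∑ i, if a i = 1 then 1 else 0) := by
    rw [← hcs, hC, Finset.mul_sum, Finset.mul_sum]
    unfold Pr
    rw [Fintype.sum_prod_type]
    refine Finset.sum_congr rfl fun σ _ => ?_
    rw [Fintype.sum_prod_type, Finset.sum_mul]
    refine Finset.sum_congr rfl fun T _ => ?_
    by_cases hT : P T <;> by_cases hA : a (σ k) = 1
    · simp only [hT, hA, and_self, if_true, w]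
      refine Eq.trans ?_ (congrArg _ (bern_sum (fun j => if j ∈ T then τ (σ j) else ν (σ j))))
      rw [Finset.mul_sum]
    all_goals simp [hT, hA]
  have num : Pr n s t τ ν (fun ω => ω.2.2 k = true ∧ P ω.2.1 ∧ a (ω.1 k) = 1) =
      K * C * (c * ∑ i, if a i = 1 then q i else 0) := by
    rw [← hcs (fun i => if a i = 1 then q i else 0), hC, Finset.mul_sum, Finset.mul_sum]
    unfold Pr
    rw [Fintype.sum_prod_type]
    refine Finset.sum_congr rfl fun σ _ => ?_
    rw [Fintype.sum_prod_type, Finset.sum_mul]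
    refine Finset.sum_congr rfl fun T _ => ?_
    by_cases hT : P T <;> by_cases hA : a (σ k) = 1
    · simp only [hT, hA, and_self, and_true, if_true, w]
      rw [← hq T hT (σ k), ← bern_marg (fun j => if j ∈ T then τ (σ j) else ν (σ j)) k,
        Finset.mul_sum]
      refine Finset.sum_congr rfl fun R _ => ?_
      by_cases hR : R k = true
      · rw [if_pos hR, if_pos hR]
      · rw [if_neg hR, if_neg hR, mul_zero]
    all_goals simp [hT, hA]
  have ha' : ((univ.filter (fun i => a i = 1)).card : ℝ) ≠ 0 := by
    exact_mod_cast ha.ne'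
  have e1 : (∑ i, if a i = 1 then (1 : ℝ) else 0) = ((univ.filter (fun i => a i = 1)).card : ℝ) := by
    simp
  unfold cPr
  rw [num, den, e1, ← Finset.sum_filter]
  field_simp

/-- Conditional response probabilities given treatment status and `A_k = 1`:
`Pr(R_k = 1 | (T_k = 1) ∩ (A_k = 1)) = (1/|a|)·Σ_{i : a i = 1} τ i` and
`Pr(R_k = 1 | (T_k = 0) ∩ (A_k = 1)) = (1/|a|)·Σ_{i : a i = 1} ν i`. -/
theorem response_given_treatment_and_attribute_one (n s t : ℕ) (ht : 0 < t) (hts : t < s) (hsn : s ≤ n)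
    (τ ν : Fin n → ℝ) (hτ : ∀ i, τ i ∈ Set.Icc (0 : ℝ) 1) (hν : ∀ i, ν i ∈ Set.Icc (0 : ℝ) 1)
    (a : Fin n → Fin 2) (ha : 0 < (univ.filter (fun i => a i = 1)).card) (k : Fin s) :
    cPr n s t τ ν (fun ω => ω.2.2 k = true) (fun ω => k ∈ ω.2.1 ∧ a (ω.1 k) = 1) =
      (1 / ((univ.filter (fun i => a i = 1)).card : ℝ)) *
        ∑ i ∈ univ.filter (fun i => a i = 1), τ i ∧
    cPr n s t τ ν (fun ω => ω.2.2 k = true) (fun ω => k ∉ ω.2.1 ∧ a (ω.1 k) = 1) =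
      (1 / ((univ.filter (fun i => a i = 1)).card : ℝ)) *
        ∑ i ∈ univ.filter (fun i => a i = 1), ν i := by
  constructor
  · refine cPr_gen n s t hts hsn τ ν a ha k (fun T => k ∈ T) τ ?_ ?_
    · intro T hT i; rw [if_pos hT]
    · obtain ⟨T, h1, _, h2⟩ := Finset.exists_subsuperset_card_eq
        (Finset.subset_univ {k}) (n := t) (by simp; omega) (by simpa using hts.le)
      exact ⟨T, h2, h1 (Finset.mem_singleton_self k)⟩
  · refine cPr_gen n s t hts hsn τ ν a ha k (fun T => k ∉ T) ν ?_ ?_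
    · intro T hT i; rw [if_neg hT]
    · obtain ⟨T, h1, h2⟩ := Finset.exists_subset_card_eq
        (s := (univ : Finset (Fin s)).erase k) (n := t)
        (by rw [Finset.card_erase_of_mem (Finset.mem_univ k)]; simp; omega)
      exact ⟨T, h2, fun h => by simpa using h1 h⟩

end RCT
end

section
/- In the randomized controlled trial model with responses, for every attribute a : N → {0,1} with 0 < |a| < n and every position k ∈ {1,…,s}, the effect of the attribute satisfies: Pr(R_k = 1 | A_k = 1) − Pr(R_k = 1 | A_k = 0) = (t/s)·[(1/|a|)·Σ_{i : a(i)=1} τ_i − (1/(n−|a|))·Σ_{i : a(i)=0} τ_i] + (1 − t/s)·[(1/|a|)·Σ_{i : a(i)=1} ν_i − (1/(n−|a|))·Σ_{i : a(i)=0} ν_i], where A_k = a(i_k) and |a| = #{i : a(i)=1}. -/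
/- Randomized controlled trial model with responses:
   a uniformly random injective s-tuple of individuals from `Fin n`
   (encoded as `Fin s ↪ Fin n`), an independent uniformly random t-element
   subset of positions `Fin s` (the treated positions), and, given these,
   independent Bernoulli responses at each position: position `k` responds
   with probability `τ (i_k)` if treated and `ν (i_k)` if untreated. -/

open Finset BigOperators
open scoped Classical

namespace RCT

theorem sumR (s : ℕ) (p : Fin s → ℝ) :
    ∑ R : Fin s → Bool, ∏ j, (if R j = true then p j else 1 - p j) = 1 := by
  have h := Finset.prod_univ_sum (fun _ : Fin s => (univ : Finset Bool))
    (fun j b => if b = true then p j else 1 - p j)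
  rw [Fintype.piFinset_univ] at h
  rw [← h]
  simp

theorem sumRk (s : ℕ) (p : Fin s → ℝ) (k : Fin s) :
    ∑ R : Fin s → Bool, (if R k = true then
      ∏ j, (if R j = true then p j else 1 - p j) else 0) = p k := by
  have h := Finset.prod_univ_sum (fun _ : Fin s => (univ : Finset Bool))
    (fun j b => if b = true then p j else (if j = k then 0 else 1 - p j))
  rw [Fintype.piFinset_univ] at h
  have h2 : ∏ j : Fin s, ∑ b : Bool,
      (if b = true then p j else (if j = k then 0 else 1 - p j)) = p k := by
    rw [Finset.prod_eq_single k]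
    · simp
    · intro j _ hj
      simp [hj]
    · simp
  rw [h2] at h
  rw [h]
  refine Finset.sum_congr rfl fun R _ => ?_
  by_cases hk : R k = true
  · rw [if_pos hk]
    refine Finset.prod_congr rfl fun j _ => ?_
    by_cases hj : j = k
    · subst hj
      simp [hk]
    · simp [hj]
  · rw [if_neg hk]
    symm
    apply Finset.prod_eq_zero (Finset.mem_univ k)
    simp [hk]

theorem cardNot (s t : ℕ) (k : Fin s) :
    ((univ.filter (fun T : Finset (Fin s) => T.card = t ∧ k ∉ T)).card : ℝ) * s
      = (s.choose t : ℝ) * ((s : ℝ) - t) := by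
  have e : univ.filter (fun T : Finset (Fin s) => T.card = t ∧ k ∉ T)
      = powersetCard t (univ.erase k) := by
    ext T
    simp [mem_powersetCard, subset_erase, and_comm]
  rw [e, card_powersetCard, card_erase_of_mem (mem_univ k), card_univ, Fintype.card_fin]
  obtain ⟨m, rfl⟩ : ∃ m, s = m + 1 := ⟨s - 1, by have := k.2; omega⟩
  have h := Nat.choose_mul_succ_eq m t
  simp only [Nat.add_sub_cancel]
  by_cases hle : t ≤ m + 1
  · rw [← Nat.cast_sub hle]
    exact_mod_cast h
  · rw [Nat.choose_eq_zero_of_lt (by omega), Nat.choose_eq_zero_of_lt (by omega)]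
    simp

theorem sumT (s t : ℕ) (hts : t ≤ s) (k : Fin s) (x y : ℝ) :
    ∑ T : Finset (Fin s), (if T.card = t then ((s.choose t : ℝ))⁻¹ else 0) *
      (if k ∈ T then x else y) = (t : ℝ) / s * x + (1 - (t : ℝ) / s) * y := by
  have hc : (s.choose t : ℝ) ≠ 0 := by exact_mod_cast (Nat.choose_pos hts).ne'
  have hs : (s : ℝ) ≠ 0 := by have := k.2; exact_mod_cast (by omega : s ≠ 0)
  have h1 := cardNot s t k
  have h2 : ((univ.filter (fun T : Finset (Fin s) => T.card = t)).card : ℝ) = s.choose t := by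
    have e : univ.filter (fun T : Finset (Fin s) => T.card = t) = powersetCard t univ := by
      ext T
      simp [mem_powersetCard]
    rw [e, card_powersetCard, card_univ, Fintype.card_fin]
  have h3 : ∀ T : Finset (Fin s), (if T.card = t then ((s.choose t : ℝ))⁻¹ else 0) *
      (if k ∈ T then x else y) = ((s.choose t : ℝ))⁻¹ * x * (if T.card = t then 1 else 0)
        + ((s.choose t : ℝ))⁻¹ * (y - x) * (if T.card = t ∧ k ∉ T then 1 else 0) := by
    intro T
    by_cases h : T.card = t <;> by_cases h' : k ∈ T <;> simp [h, h']
    ring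
  rw [Finset.sum_congr rfl fun T _ => h3 T, Finset.sum_add_distrib, ← Finset.mul_sum,
    ← Finset.mul_sum, Finset.sum_boole, Finset.sum_boole, h2]
  rw [← eq_div_iff hs] at h1
  rw [h1]
  field_simp
  ring

theorem sumσ (n s : ℕ) (hsn : s ≤ n) (k : Fin s) (f : Fin n → ℝ) :
    ((Fintype.card (Fin s ↪ Fin n) : ℝ))⁻¹ * ∑ σ : Fin s ↪ Fin n, f (σ k)
      = (n : ℝ)⁻¹ * ∑ i, f i := by
  have hn : 0 < n := lt_of_lt_of_le (lt_of_le_of_lt (Nat.zero_le _) k.2) hsn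
  have hsym : ∀ i j : Fin n, (univ.filter (fun σ : Fin s ↪ Fin n => σ k = i)).card
      = (univ.filter (fun σ : Fin s ↪ Fin n => σ k = j)).card := by
    intro i j
    refine Finset.card_bij' (fun σ _ => σ.trans (Equiv.swap i j).toEmbedding)
      (fun σ _ => σ.trans (Equiv.swap i j).toEmbedding) ?_ ?_ ?_ ?_
    · intro σ h
      simp at h
      simp [h]
    · intro σ h
      simp at h
      simp [h]
    · intro σ h
      ext x
      simp
    · intro σ h
      ext x
      simp
  let i0 : Fin n := ⟨0, hn⟩
  have key : ∀ g : Fin n → ℝ, ∑ σ : Fin s ↪ Fin n, g (σ k)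
      = ((univ.filter (fun σ : Fin s ↪ Fin n => σ k = i0)).card : ℝ) * ∑ i, g i := by
    intro g
    rw [← Finset.sum_fiberwise (univ : Finset (Fin s ↪ Fin n)) (fun σ => σ k), Finset.mul_sum]
    refine Finset.sum_congr rfl fun i _ => ?_
    rw [hsym i0 i, ← nsmul_eq_mul]
    apply Finset.sum_eq_card_nsmul
    intro σ h
    simp at h
    rw [h]
  have h1 := key (fun _ => 1)
  simp only [Finset.sum_const, Finset.card_univ, Fintype.card_fin, nsmul_eq_mul, mul_one] at h1
  have hN : (Fintype.card (Fin s ↪ Fin n) : ℝ) ≠ 0 := by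
    have : Nonempty (Fin s ↪ Fin n) := ⟨Fin.castLEEmb hsn⟩
    exact_mod_cast Fintype.card_ne_zero
  have hn' : (n : ℝ) ≠ 0 := by exact_mod_cast hn.ne'
  rw [key f, inv_mul_eq_iff_eq_mul₀ hN, h1]
  field_simp

theorem PrF (n s t : ℕ) (hts : t ≤ s) (hsn : s ≤ n) (τ ν : Fin n → ℝ)
    (a : Fin n → Fin 2) (c : Fin 2) (k : Fin s) :
    Pr n s t τ ν (fun ω => a (ω.1 k) = c)
      = (n : ℝ)⁻¹ * ((univ.filter (fun i => a i = c)).card : ℝ) := by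
  have h := sumσ n s hsn k (fun i => if a i = c then 1 else 0)
  conv_rhs at h => rw [Finset.sum_boole]
  rw [← h, Pr, Fintype.sum_prod_type, Finset.mul_sum]
  refine Finset.sum_congr rfl fun σ _ => ?_
  rw [Fintype.sum_prod_type]
  by_cases hc : a (σ k) = c
  · simp only [hc, if_true, w]
    have h1 := sumT s t hts k 1 1
    simp only [ite_self, mul_one] at h1
    have h2 : (t : ℝ) / s + (1 - (t : ℝ) / s) = 1 := by ring
    rw [h2] at h1
    conv_rhs => rw [← h1, Finset.mul_sum]
    refine Finset.sum_congr rfl fun T _ => ?_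
    have h3 := congrArg (fun z => ((Fintype.card (Fin s ↪ Fin n) : ℝ))⁻¹ *
      (if T.card = t then ((s.choose t : ℝ))⁻¹ else 0) * z)
      (sumR s (fun j => if j ∈ T then τ (σ j) else ν (σ j)))
    simp only [mul_one] at h3
    rw [Finset.mul_sum] at h3
    exact h3
  · simp [hc]

theorem PrE (n s t : ℕ) (hts : t ≤ s) (hsn : s ≤ n) (τ ν : Fin n → ℝ)
    (a : Fin n → Fin 2) (c : Fin 2) (k : Fin s) :
    Pr n s t τ ν (fun ω => ω.2.2 k = true ∧ a (ω.1 k) = c)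
      = (n : ℝ)⁻¹ * ((t : ℝ) / s * (∑ i ∈ univ.filter (fun i => a i = c), τ i)
        + (1 - (t : ℝ) / s) * (∑ i ∈ univ.filter (fun i => a i = c), ν i)) := by
  have h := sumσ n s hsn k
    (fun i => if a i = c then (t : ℝ) / s * τ i + (1 - (t : ℝ) / s) * ν i else 0)
  conv_rhs at h =>
    rw [← Finset.sum_filter, Finset.sum_add_distrib, ← Finset.mul_sum, ← Finset.mul_sum]
  rw [← h, Pr, Fintype.sum_prod_type, Finset.mul_sum]
  refine Finset.sum_congr rfl fun σ _ => ?_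
  rw [Fintype.sum_prod_type]
  by_cases hc : a (σ k) = c
  · simp only [hc, if_true, w, and_true]
    rw [← sumT s t hts k, Finset.mul_sum]
    refine Finset.sum_congr rfl fun T _ => ?_
    rw [← sumRk s (fun j => if j ∈ T then τ (σ j) else ν (σ j)) k, Finset.mul_sum, Finset.mul_sum]
    refine Finset.sum_congr rfl fun R _ => ?_
    by_cases hR : R k = true
    · simp only [hR, if_true]
      ring
    · simp [hR]
  · simp [hc]

/-- Effect of an attribute:
`Pr(R_k = 1 | A_k = 1) − Pr(R_k = 1 | A_k = 0)
  = (t/s)·[(1/|a|)·Σ_{a i = 1} τ i − (1/(n−|a|))·Σ_{a i = 0} τ i]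
    + (1 − t/s)·[(1/|a|)·Σ_{a i = 1} ν i − (1/(n−|a|))·Σ_{a i = 0} ν i]`. -/
theorem effect_of_attribute (n s t : ℕ) (ht : 0 < t) (hts : t < s) (hsn : s ≤ n)
    (τ ν : Fin n → ℝ) (hτ : ∀ i, τ i ∈ Set.Icc (0 : ℝ) 1) (hν : ∀ i, ν i ∈ Set.Icc (0 : ℝ) 1)
    (a : Fin n → Fin 2) (ha0 : 0 < (univ.filter (fun i => a i = 1)).card)
    (han : (univ.filter (fun i => a i = 1)).card < n) (k : Fin s) :
    cPr n s t τ ν (fun ω => ω.2.2 k = true) (fun ω => a (ω.1 k) = 1) -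
      cPr n s t τ ν (fun ω => ω.2.2 k = true) (fun ω => a (ω.1 k) = 0) =
      ((t : ℝ) / s) *
          ((1 / ((univ.filter (fun i => a i = 1)).card : ℝ)) *
              (∑ i ∈ univ.filter (fun i => a i = 1), τ i) -
            (1 / ((n : ℝ) - ((univ.filter (fun i => a i = 1)).card : ℝ))) *
              (∑ i ∈ univ.filter (fun i => a i = 0), τ i)) +
        (1 - (t : ℝ) / s) *
          ((1 / ((univ.filter (fun i => a i = 1)).card : ℝ)) *
              (∑ i ∈ univ.filter (fun i => a i = 1), ν i) -
            (1 / ((n : ℝ) - ((univ.filter (fun i => a i = 1)).card : ℝ))) *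
              (∑ i ∈ univ.filter (fun i => a i = 0), ν i)) := by
  have hn : (n : ℝ) ≠ 0 := by exact_mod_cast (by omega : n ≠ 0)
  have h0 : ((univ.filter (fun i => a i = 0)).card : ℝ)
      = (n : ℝ) - ((univ.filter (fun i => a i = 1)).card : ℝ) := by
    have h := Finset.card_filter_add_card_filter_not (s := (univ : Finset (Fin n)))
      (fun i => a i = 1)
    have e : univ.filter (fun i => ¬ a i = 1) = univ.filter (fun i => a i = 0) := by
      ext i
      simp only [mem_filter, mem_univ, true_and]
      generalize a i = b
      revert b
      decide
    rw [e, card_univ, Fintype.card_fin] at h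
    rw [eq_sub_iff_add_eq, add_comm]
    exact_mod_cast h
  have h1 : ((univ.filter (fun i => a i = 1)).card : ℝ) ≠ 0 := by exact_mod_cast ha0.ne'
  have h2 : (n : ℝ) - ((univ.filter (fun i => a i = 1)).card : ℝ) ≠ 0 :=
    sub_ne_zero.mpr (by exact_mod_cast han.ne')
  simp only [cPr]
  rw [PrE n s t hts.le hsn, PrE n s t hts.le hsn, PrF n s t hts.le hsn, PrF n s t hts.le hsn,
    mul_div_mul_left _ _ (inv_ne_zero hn), mul_div_mul_left _ _ (inv_ne_zero hn), h0]
  ring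

end RCT
end
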